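/- arXiv:2510.04099 — 5 statements merged into one kernel-verified Lean document; each statement's English description precedes it below -/
import Mathlib

section
/- Let m ≥ 3 and let e_1,…,e_m ∈ ℝ² be nonzero vectors which can be written e_j = ρ_j·(cos θ_j, sin θ_j) with ρ_j > 0 and 0 ≤ θ_1 ≤ θ_2 ≤ … ≤ θ_m < 2π (i.e. they are ordered counterclockwise), and assume ∑_{j=1}^m e_j = 0. Let v_0 = 0 and v_k = ∑_{j=1}^k e_j for k = 1,…,m−1, and let P be the convex hull of {v_0, v_1, …, v_{m−1}} (the convex polygon with edge vectors e_1,…,e_m). Then diam(P) = (1/2)·max{ ∑_{j=1}^m |⟨e_j,u⟩| : u ∈ ℝ², ‖u‖₂ = 1 }, where diam(P) = sup{‖x − y‖₂ : x,y ∈ P}. Consequently the diameter-to-perimeter ratio of P equals (max_{‖u‖₂=1} ∑_{j=1}^m |⟨e_j,u⟩|) / (2·∑_{j=1}^m ‖e_j‖₂). -/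
noncomputable section

open Real
open scoped RealInnerProductSpace ENNReal

/-- ℝ² as a Euclidean space. -/
abbrev E2 : Type := EuclideanSpace ℝ (Fin 2)

/-- The vector `(x, y)` in ℝ². -/
def vec2 (x y : ℝ) : E2 := (WithLp.equiv 2 (Fin 2 → ℝ)).symm ![x, y]

/-- The coordinates of a vector in ℝ². -/
def toFun2 (v : E2) : Fin 2 → ℝ := WithLp.equiv 2 (Fin 2 → ℝ) v

/-- The phaseless measurement map `Φ_A(x) = (|⟨a_j, x⟩|)_j`. -/
def PhiMap {m : ℕ} (a : Fin m → E2) (x : E2) : EuclideanSpace ℝ (Fin m) :=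
  (WithLp.equiv 2 (Fin m → ℝ)).symm fun j => |⟪a j, x⟫|

/-- The distance `dist(x,y) = min ‖x − y‖ ‖x + y‖` (real phase retrieval distance). -/
def pdist (x y : E2) : ℝ := min ‖x - y‖ ‖x + y‖

/-- The set of Lipschitz ratios of the phaseless measurement map. -/
def ratioSet {m : ℕ} (a : Fin m → E2) : Set ℝ :=
  {r | ∃ x y : E2, pdist x y ≠ 0 ∧ r = ‖PhiMap a x - PhiMap a y‖ / pdist x y}

/-- The optimal lower Lipschitz constant `L_A`. -/
def lipL {m : ℕ} (a : Fin m → E2) : ℝ := sInf (ratioSet a)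

/-- The optimal upper Lipschitz constant `U_A`. -/
def lipU {m : ℕ} (a : Fin m → E2) : ℝ := sSup (ratioSet a)

/-- The condition number `β_A = U_A / L_A`, with `β_A = +∞` when `L_A = 0`. -/
def condNum {m : ℕ} (a : Fin m → E2) : ℝ≥0∞ :=
  if lipL a = 0 then ⊤ else ENNReal.ofReal (lipU a / lipL a)

/-- An edge family: nonzero vectors with pairwise distinct directions summing to zero
(the edge vectors of a strictly convex polygon). -/
def IsEdgeFamily {m : ℕ} (e : Fin m → E2) : Prop :=
  (∀ j, e j ≠ 0) ∧
  (∀ i j : Fin m, i ≠ j → ‖e i‖⁻¹ • e i ≠ ‖e j‖⁻¹ • e j) ∧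
  ∑ j, e j = 0

/-- The diameter-to-perimeter ratio of the polygon with edge vectors `e`. -/
def rRatio {m : ℕ} (e : Fin m → E2) : ℝ :=
  sSup {s | ∃ u : E2, ‖u‖ = 1 ∧ s = ∑ j, |⟪e j, u⟫|} / (2 * ∑ j, ‖e j‖)

/-- An optimal edge family: minimizes `rRatio` among all edge families of size `m`. -/
def IsOptimalEdgeFamily {m : ℕ} (e : Fin m → E2) : Prop :=
  IsEdgeFamily e ∧ ∀ e' : Fin m → E2, IsEdgeFamily e' → rRatio e ≤ rRatio e'

/-- The complex square map on ℝ² ≅ ℂ: `f(t·(cos φ, sin φ)) = t²·(cos 2φ, sin 2φ)`. -/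
def csq (v : E2) : E2 :=
  vec2 (toFun2 v 0 ^ 2 - toFun2 v 1 ^ 2) (2 * toFun2 v 0 * toFun2 v 1)

/-- The harmonic frame `E_m`: the `j`-th row is `(cos((j−1)π/m), sin((j−1)π/m))`, `j = 1,…,m`. -/
def harmonicFrame (m : ℕ) : Fin m → E2 :=
  fun j => vec2 (Real.cos ((j : ℕ) * π / m)) (Real.sin ((j : ℕ) * π / m))


lemma aux_lower {m : ℕ} (e : Fin m → E2) (hm : 3 ≤ m) (hsum : ∑ j, e j = 0) (p : Fin m → Prop)
    [DecidablePred p] (hp : ∀ i j, i ≤ j → p j → p i) :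
    ∑ j, (if p j then e j else 0) ∈ Set.range fun k : Fin m => ∑ j ∈ Finset.Iio k, e j := by
  by_cases h : ∀ j, p j
  · refine ⟨⟨0, by omega⟩, ?_⟩
    simp only [h, if_true, hsum]
    apply Finset.sum_eq_zero
    intro j hj
    rw [Finset.mem_Iio, Fin.lt_def] at hj
    simp at hj
  · push Not at h
    have hne : (Finset.univ.filter fun j => ¬ p j).Nonempty := by
      obtain ⟨j, hj⟩ := h
      exact ⟨j, by simp [hj]⟩
    refine ⟨(Finset.univ.filter fun j => ¬ p j).min' hne, ?_⟩
    have hmin := Finset.min'_mem _ hne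
    have hle : ∀ j, ¬ p j → (Finset.univ.filter fun j => ¬ p j).min' hne ≤ j := fun j hj =>
      Finset.min'_le _ _ (by simp [hj])
    generalize (Finset.univ.filter fun j => ¬ p j).min' hne = k at *
    simp only [Finset.mem_filter, Finset.mem_univ, true_and] at hmin
    rw [← Finset.sum_filter]
    show ∑ j ∈ Finset.Iio k, e j = _
    congr 1
    ext j
    simp only [Finset.mem_Iio, Finset.mem_filter, Finset.mem_univ, true_and]
    constructor
    · intro hj
      by_contra hc
      exact absurd (hle j hc) (not_le.mpr hj)
    · intro hj
      by_contra hc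
      exact hmin (hp k j (not_lt.mp hc) hj)

lemma aux_bdd {m : ℕ} (e : Fin m → E2) :
    BddAbove {s | ∃ u : E2, ‖u‖ = 1 ∧ s = ∑ j, |⟪e j, u⟫|} := by
  refine ⟨∑ j, ‖e j‖, ?_⟩
  rintro s ⟨u, hu, rfl⟩
  refine Finset.sum_le_sum fun j _ => ?_
  have := abs_real_inner_le_norm (e j) u
  rwa [hu, mul_one] at this

lemma aux_upper {m : ℕ} (e : Fin m → E2) (hsum : ∑ j, e j = 0) (i k : Fin m) (hik : i ≤ k) :
    ‖∑ j ∈ Finset.Iio k, e j - ∑ j ∈ Finset.Iio i, e j‖ ≤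
      (1 / 2) * sSup {s | ∃ u : E2, ‖u‖ = 1 ∧ s = ∑ j, |⟪e j, u⟫|} := by
  set w := ∑ j ∈ Finset.Iio k, e j - ∑ j ∈ Finset.Iio i, e j with hw
  by_cases h0 : w = 0
  · rw [h0, norm_zero]
    apply mul_nonneg (by norm_num)
    apply Real.sSup_nonneg
    rintro s ⟨u, _, rfl⟩
    positivity
  have hn : ‖w‖ ≠ 0 := norm_ne_zero_iff.mpr h0
  have hu : ‖(‖w‖⁻¹ • w)‖ = 1 := by
    rw [norm_smul, norm_inv, norm_norm, inv_mul_cancel₀ hn]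
  have hwu : ⟪w, ‖w‖⁻¹ • w⟫ = ‖w‖ := by
    rw [real_inner_smul_right, real_inner_self_eq_norm_sq]
    field_simp
  generalize ‖w‖⁻¹ • w = u at hu hwu
  have hle : ∑ j, |⟪e j, u⟫| ≤ sSup {s | ∃ u : E2, ‖u‖ = 1 ∧ s = ∑ j, |⟪e j, u⟫|} :=
    le_csSup (aux_bdd e) ⟨u, hu, rfl⟩
  have h1 : ∑ j, ⟪e j, u⟫ = 0 := by rw [← sum_inner, hsum, inner_zero_left]
  have hI : ∀ k : Fin m, ∑ j ∈ Finset.Iio k, ⟪e j, u⟫ = ∑ j, if j < k then ⟪e j, u⟫ else 0 := by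
    intro k
    rw [← Finset.sum_filter]
    congr 1
    ext j
    simp
  have h2 : 2 * ‖w‖ ≤ ∑ j, |⟪e j, u⟫| := by
    calc 2 * ‖w‖ = ∑ j, (2 * (if j < k then ⟪e j, u⟫ else 0)
          - 2 * (if j < i then ⟪e j, u⟫ else 0) - ⟪e j, u⟫) := by
          rw [← hwu, hw, inner_sub_left, sum_inner, sum_inner, hI, hI, Finset.sum_sub_distrib,
            Finset.sum_sub_distrib, h1, ← Finset.mul_sum, ← Finset.mul_sum]
          ring
      _ ≤ _ := by
          refine Finset.sum_le_sum fun j _ => ?_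
          have a1 := le_abs_self ⟪e j, u⟫
          have a2 := neg_abs_le ⟪e j, u⟫
          split_ifs with c1 c2 c2
          · linarith
          · linarith
          · exact absurd (lt_of_lt_of_le c2 hik) c1
          · linarith
  linarith

lemma aux_main {m : ℕ} (hm : 3 ≤ m) (e : Fin m → E2) (ρ θ : Fin m → ℝ)
    (hρ : ∀ j, 0 < ρ j)
    (he : ∀ j, e j = ρ j • vec2 (Real.cos (θ j)) (Real.sin (θ j)))
    (hθ0 : ∀ j, 0 ≤ θ j)
    (hmono : Monotone θ)
    (hθlt : ∀ j, θ j < 2 * π)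
    (hsum : ∑ j, e j = 0) (u : E2) (hu : ‖u‖ = 1) (hu0 : 0 ≤ u 0) :
    ∑ j, |⟪e j, u⟫| ≤
      2 * Metric.diam (Set.range fun k : Fin m => ∑ j ∈ Finset.Iio k, e j) := by
  have hn : u 0 ^ 2 + u 1 ^ 2 = 1 := by
    have := EuclideanSpace.real_norm_sq_eq u
    rw [hu, Fin.sum_univ_two] at this
    linarith
  set ψ := Real.arcsin (u 1) with hψ
  have hs : Real.sin ψ = u 1 := Real.sin_arcsin (by nlinarith) (by nlinarith)
  have hc : Real.cos ψ = u 0 := by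
    rw [hψ, Real.cos_arcsin, show 1 - u 1 ^ 2 = u 0 ^ 2 by linarith, Real.sqrt_sq hu0]
  have hψ1 : -(π / 2) ≤ ψ := Real.neg_pi_div_two_le_arcsin _
  have hψ2 : ψ ≤ π / 2 := Real.arcsin_le_pi_div_two _
  have hx : ∀ j, ⟪e j, u⟫ = ρ j * Real.cos (θ j - ψ) := by
    intro j
    rw [he, real_inner_smul_left, Real.cos_sub, hs, hc]
    congr 1
    simp [vec2, PiLp.inner_apply, Fin.sum_univ_two]
    ring
  have hb := aux_lower e hm hsum (fun j => θ j ≤ 3 * π / 2 + ψ)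
    (fun i j hij h => (hmono hij).trans h)
  have ha := aux_lower e hm hsum (fun j => θ j < π / 2 + ψ)
    (fun i j hij h => (hmono hij).trans_lt h)
  have hbd : Bornology.IsBounded (Set.range fun k : Fin m => ∑ j ∈ Finset.Iio k, e j) :=
    (Set.finite_range _).isBounded
  have hd := Metric.dist_le_diam_of_mem hbd ha hb
  rw [dist_eq_norm] at hd
  have hcs := real_inner_le_norm ((∑ j, if θ j < π / 2 + ψ then e j else 0) -
    (∑ j, if θ j ≤ 3 * π / 2 + ψ then e j else 0)) u
  rw [hu, mul_one] at hcs
  have h1 : ∑ j, ⟪e j, u⟫ = 0 := by rw [← sum_inner, hsum, inner_zero_left]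
  have key : ∑ j, |⟪e j, u⟫| = 2 * ⟪(∑ j, if θ j < π / 2 + ψ then e j else 0) -
    (∑ j, if θ j ≤ 3 * π / 2 + ψ then e j else 0), u⟫ + ∑ j, ⟪e j, u⟫ := by
    rw [inner_sub_left, sum_inner, sum_inner, mul_sub, Finset.mul_sum, Finset.mul_sum,
      ← Finset.sum_sub_distrib, ← Finset.sum_add_distrib]
    refine Finset.sum_congr rfl fun j _ => ?_
    have p := hθ0 j
    have q := hθlt j
    have r := hρ j
    have hpi := Real.pi_pos
    split_ifs with c1 c2 c2
    · have : 0 ≤ Real.cos (θ j - ψ) := Real.cos_nonneg_of_neg_pi_div_two_le_of_le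
        (by linarith) (by linarith)
      rw [abs_of_nonneg (by rw [hx]; positivity)]
      ring
    · exfalso; linarith
    · have : Real.cos (θ j - ψ) ≤ 0 := Real.cos_nonpos_of_pi_div_two_le_of_le
        (by linarith) (by linarith)
      rw [abs_of_nonpos (by rw [hx]; exact mul_nonpos_of_nonneg_of_nonpos r.le this),
        inner_zero_left]
      ring
    · have : 0 ≤ Real.cos (θ j - ψ) := by
        rw [← Real.cos_sub_two_pi]
        exact Real.cos_nonneg_of_neg_pi_div_two_le_of_le (by linarith) (by linarith)
      rw [abs_of_nonneg (by rw [hx]; positivity), inner_zero_left]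
      ring
  rw [key, h1]
  linarith

/-- The diameter of a convex polygon with counterclockwise-ordered edge
vectors `e_1, …, e_m` summing to zero equals half the maximal total projection of the
edge vectors, and consequently its diameter-to-perimeter ratio equals
`max_{‖u‖=1} ∑ |⟨e_j,u⟩| / (2 ∑ ‖e_j‖)`. -/
theorem stmt2 {m : ℕ} (hm : 3 ≤ m) (e : Fin m → E2) (ρ θ : Fin m → ℝ)
    (hρ : ∀ j, 0 < ρ j)
    (he : ∀ j, e j = ρ j • vec2 (Real.cos (θ j)) (Real.sin (θ j)))
    (hθ0 : 0 ≤ θ ⟨0, by omega⟩)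
    (hmono : Monotone θ)
    (hθlt : ∀ j, θ j < 2 * π)
    (hsum : ∑ j, e j = 0)
    (P : Set E2)
    (hP : P = convexHull ℝ (Set.range fun k : Fin m => ∑ j ∈ Finset.Iio k, e j)) :
    Metric.diam P = (1 / 2) * sSup {s | ∃ u : E2, ‖u‖ = 1 ∧ s = ∑ j, |⟪e j, u⟫|} ∧
    Metric.diam P / (∑ j, ‖e j‖) =
      sSup {s | ∃ u : E2, ‖u‖ = 1 ∧ s = ∑ j, |⟪e j, u⟫|} / (2 * ∑ j, ‖e j‖) := by
  have hθ : ∀ j, 0 ≤ θ j := fun j => hθ0.trans (hmono (Fin.le_def.mpr (Nat.zero_le _)))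
  have main : Metric.diam P =
      (1 / 2) * sSup {s | ∃ u : E2, ‖u‖ = 1 ∧ s = ∑ j, |⟪e j, u⟫|} := by
    rw [hP, convexHull_diam]
    apply le_antisymm
    · apply Metric.diam_le_of_forall_dist_le
      · apply mul_nonneg (by norm_num)
        apply Real.sSup_nonneg
        rintro s ⟨u, _, rfl⟩
        positivity
      · rintro _ ⟨i, rfl⟩ _ ⟨k, rfl⟩
        rcases le_total i k with h | h
        · rw [dist_comm, dist_eq_norm]
          exact aux_upper e hsum i k h
        · rw [dist_eq_norm]
          exact aux_upper e hsum k i h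
    · have : sSup {s | ∃ u : E2, ‖u‖ = 1 ∧ s = ∑ j, |⟪e j, u⟫|} ≤
          2 * Metric.diam (Set.range fun k : Fin m => ∑ j ∈ Finset.Iio k, e j) := by
        apply Real.sSup_le
        · rintro s ⟨u, hu, rfl⟩
          rcases le_total 0 (u 0) with h | h
          · exact aux_main hm e ρ θ hρ he hθ hmono hθlt hsum u hu h
          · have := aux_main hm e ρ θ hρ he hθ hmono hθlt hsum (-u) (by rwa [norm_neg])
              (by simpa using h)
            simpa only [inner_neg_right, abs_neg] using this
        · exact mul_nonneg (by norm_num) Metric.diam_nonneg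
      linarith
  refine ⟨main, ?_⟩
  rw [main, mul_comm (1 / 2 : ℝ), mul_one_div, div_div]
end
end

section
/- Let z_1,…,z_m ∈ ℂ and let a_j ∈ ℝ² be the vector corresponding to z_j under the identification ℝ² ≅ ℂ. Then ∑_{j=1}^m a_j a_jᵀ = C·I₂ with C = (1/2)·∑_{j=1}^m |z_j|² holds if and only if ∑_{j=1}^m z_j² = 0. In other words, a family of vectors in ℝ² is a tight frame (up to the degenerate all-zero case) exactly when the sum of the squares of the corresponding complex numbers vanishes. -/
noncomputable section

open Real
open scoped RealInnerProductSpace ENNReal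

/-- Under the identification ℝ² ≅ ℂ, the vectors `a_j` corresponding to
complex numbers `z_j` form a tight frame `∑ a_j a_jᵀ = C·I₂` with
`C = (1/2)·∑ |z_j|²` if and only if `∑ z_j² = 0`. -/
theorem stmt3 {m : ℕ} (z : Fin m → ℂ) (a : Fin m → E2)
    (ha : ∀ j, a j = vec2 (z j).re (z j).im) :
    (∑ j, Matrix.vecMulVec (toFun2 (a j)) (toFun2 (a j)) =
        ((1 / 2) * ∑ j, ‖z j‖ ^ 2) • (1 : Matrix (Fin 2) (Fin 2) ℝ)) ↔
      ∑ j, (z j) ^ 2 = 0 := by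
  have hv : ∀ j, toFun2 (a j) = ![(z j).re, (z j).im] := by
    intro j
    rw [ha j]
    rfl
  have hn : ∑ j, ‖z j‖ ^ 2 = ∑ j, (z j).re * (z j).re + ∑ j, (z j).im * (z j).im := by
    rw [← Finset.sum_add_distrib]
    refine Finset.sum_congr rfl fun j _ => ?_
    rw [← Complex.normSq_eq_norm_sq, Complex.normSq_apply]
  have hre : (∑ j, (z j) ^ 2).re = ∑ j, (z j).re * (z j).re - ∑ j, (z j).im * (z j).im := by
    rw [Complex.re_sum, ← Finset.sum_sub_distrib]
    refine Finset.sum_congr rfl fun j _ => ?_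
    rw [pow_two, Complex.mul_re]
  have him : (∑ j, (z j) ^ 2).im = 2 * ∑ j, (z j).re * (z j).im := by
    rw [Complex.im_sum, Finset.mul_sum]
    refine Finset.sum_congr rfl fun j _ => ?_
    rw [pow_two, Complex.mul_im]
    ring
  have hc : ∑ j, (z j).im * (z j).re = ∑ j, (z j).re * (z j).im :=
    Finset.sum_congr rfl fun j _ => mul_comm _ _
  rw [Complex.ext_iff, hre, him, hn, ← Matrix.ext_iff]
  simp only [Fin.forall_fin_two, Matrix.sum_apply, Matrix.vecMulVec_apply, hv,
    Matrix.smul_apply, Matrix.one_apply, smul_eq_mul, Matrix.cons_val_zero,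
    Matrix.cons_val_one, Complex.zero_re, Complex.zero_im, hc]
  norm_num
  constructor
  · rintro ⟨⟨h1, h2⟩, h3, h4⟩
    exact ⟨by linarith, by linarith⟩
  · rintro ⟨h1, h2⟩
    refine ⟨⟨?_, ?_⟩, ?_, ?_⟩ <;> linarith
end
end

section
/- Let z_1,…,z_m ∈ ℂ and let a_j ∈ ℝ² be the vector corresponding to z_j under the identification ℝ² ≅ ℂ. Then max{ ∑_{j=1}^m |⟨a_j,x⟩|·|⟨a_j,y⟩| : x,y ∈ ℝ², ‖x‖₂ = ‖y‖₂ = 1, ⟨x,y⟩ = 0 } = (1/2)·max{ ∑_{j=1}^m |Re(z_j²·conj(w))| : w ∈ ℂ, |w| = 1 }. -/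
noncomputable section

open Real
open scoped RealInnerProductSpace ENNReal

lemma inner_E2 (x y : E2) : ⟪x, y⟫ = x 0 * y 0 + x 1 * y 1 := by
  simp [PiLp.inner_apply, Fin.sum_univ_two, mul_comm]

lemma norm_E2 (x : E2) : ‖x‖ = 1 ↔ x 0 ^ 2 + x 1 ^ 2 = 1 := by
  rw [EuclideanSpace.norm_eq, Real.sqrt_eq_one]
  simp [Fin.sum_univ_two]

lemma norm_C (w : ℂ) : ‖w‖ = 1 ↔ w.re ^ 2 + w.im ^ 2 = 1 := by
  rw [Complex.norm_def, Real.sqrt_eq_one, Complex.normSq_apply]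
  simp [pow_two]

/-- The termwise identity. -/
lemma term_eq (z w : ℂ) (p q d : ℝ) (hd : |d| = 1)
    (h1 : w.re = -2 * p * q) (h2 : w.im = p ^ 2 - q ^ 2) :
    |z.re * p + z.im * q| * |z.re * (-q * d) + z.im * (p * d)| =
      (1 / 2) * |(z ^ 2 * (starRingEnd ℂ) w).re| := by
  have e : (z ^ 2 * (starRingEnd ℂ) w).re =
      2 * ((z.re * p + z.im * q) * (z.re * (-q) + z.im * p)) := by
    simp only [pow_two, Complex.mul_re, Complex.mul_im, Complex.conj_re, Complex.conj_im, h1, h2]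
    ring
  have e2 : z.re * (-q * d) + z.im * (p * d) = (z.re * (-q) + z.im * p) * d := by ring
  rw [e, e2, abs_mul _ d, hd, abs_mul 2, abs_mul (z.re * p + z.im * q), abs_two]
  ring

/-- Under the identification ℝ² ≅ ℂ, with `a_j ∈ ℝ²` corresponding to
`z_j ∈ ℂ`, the maximum of `∑ |⟨a_j,x⟩|·|⟨a_j,y⟩|` over orthonormal pairs `x, y` equals
half the maximum of `∑ |Re(z_j²·conj w)|` over unimodular `w`. -/
theorem stmt4 {m : ℕ} (z : Fin m → ℂ) (a : Fin m → E2)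
    (ha : ∀ j, a j = vec2 (z j).re (z j).im) :
    sSup {s | ∃ x y : E2, ‖x‖ = 1 ∧ ‖y‖ = 1 ∧ ⟪x, y⟫ = 0 ∧
        s = ∑ j, |⟪a j, x⟫| * |⟪a j, y⟫|} =
      (1 / 2) * sSup {s | ∃ w : ℂ, ‖w‖ = 1 ∧
        s = ∑ j, |((z j) ^ 2 * (starRingEnd ℂ) w).re|} := by
  rw [← smul_eq_mul, ← Real.sSup_smul_of_nonneg (by norm_num : (0 : ℝ) ≤ 1 / 2)]
  congr 1
  ext s
  simp only [Set.mem_smul_set, Set.mem_setOf_eq, smul_eq_mul]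
  have h0 : ∀ j, a j 0 = (z j).re := fun j => by rw [ha]; simp [vec2]
  have h1 : ∀ j, a j 1 = (z j).im := fun j => by rw [ha]; simp [vec2]
  constructor
  · rintro ⟨x, y, hx, hy, hxy, rfl⟩
    rw [norm_E2] at hx hy
    rw [inner_E2] at hxy
    refine ⟨_, ⟨⟨-2 * x 0 * x 1, x 0 ^ 2 - x 1 ^ 2⟩, ?_, rfl⟩, ?_⟩
    · rw [norm_C]
      simp only
      linear_combination (x 0 ^ 2 + x 1 ^ 2 + 1) * hx
    · rw [Finset.mul_sum]
      refine Finset.sum_congr rfl fun j _ => ?_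
      have hd : |x 0 * y 1 - x 1 * y 0| = 1 := by
        rw [← sq_eq_sq₀ (abs_nonneg _) zero_le_one, sq_abs]
        linear_combination (y 0 ^ 2 + y 1 ^ 2) * hx + hy - (x 0 * y 0 + x 1 * y 1) * hxy
      have r0 : y 0 = -x 1 * (x 0 * y 1 - x 1 * y 0) := by
        linear_combination (-y 0) * hx + x 0 * hxy
      have r1 : y 1 = x 0 * (x 0 * y 1 - x 1 * y 0) := by
        linear_combination (-y 1) * hx + x 1 * hxy
      rw [← term_eq (z j) _ (x 0) (x 1) _ hd rfl rfl, ← r0, ← r1, inner_E2, inner_E2, h0, h1]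
  · rintro ⟨_, ⟨w, hw, rfl⟩, rfl⟩
    obtain ⟨c, hc⟩ := IsAlgClosed.exists_pow_nat_eq (-Complex.I * w) (n := 2) (by norm_num)
    have hcn : ‖c‖ = 1 := by
      have : ‖c‖ ^ 2 = 1 := by rw [← norm_pow, hc]; simp [hw]
      exact (pow_eq_one_iff_of_nonneg (norm_nonneg _) two_ne_zero).1 this
    rw [norm_C] at hcn
    have e1 : w.re = -2 * c.re * c.im := by
      have := congrArg Complex.im hc
      simp [pow_two] at this
      linarith
    have e2 : w.im = c.re ^ 2 - c.im ^ 2 := by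
      have := congrArg Complex.re hc
      simp [pow_two] at this
      linarith
    refine ⟨vec2 c.re c.im, vec2 (-c.im * 1) (c.re * 1), ?_, ?_, ?_, ?_⟩
    · rw [norm_E2]; simpa [vec2] using hcn
    · rw [norm_E2]; simp [vec2]; linarith
    · rw [inner_E2]; simp [vec2]; ring
    · rw [Finset.mul_sum]
      refine Finset.sum_congr rfl fun j _ => ?_
      rw [← term_eq (z j) w c.re c.im 1 abs_one e1 e2, inner_E2, inner_E2, h0, h1]
      simp [vec2]
end
end

section
/- Let z_1,…,z_m ∈ ℂ, not all zero, satisfy ∑_{j=1}^m z_j² = 0, and let A ∈ ℝ^{m×2} be the matrix whose j-th row a_j ∈ ℝ² corresponds to z_j under the identification ℝ² ≅ ℂ (so the rows of A form a tight frame). Then the condition number of A satisfies β_A = (1 − (max_{w ∈ ℂ, |w| = 1} ∑_{j=1}^m |Re(z_j²·conj(w))|) / (∑_{j=1}^m |z_j|²))^{−1/2}. -/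
noncomputable section

open Real
open scoped RealInnerProductSpace ENNReal

open Real

/-- The vector in ℝ² as a complex number. -/
def toC (x : E2) : ℂ := ⟨x 0, x 1⟩

lemma toC_norm (x : E2) : ‖toC x‖ = ‖x‖ := by
  rw [EuclideanSpace.norm_eq, Complex.norm_eq_sqrt_sq_add_sq]
  simp [toC]

lemma toC_add (x y : E2) : toC (x + y) = toC x + toC y := by
  apply Complex.ext <;> simp [toC]

lemma toC_sub (x y : E2) : toC (x - y) = toC x - toC y := by
  apply Complex.ext <;> simp [toC]

lemma toC_surj (c : ℂ) : ∃ x, toC x = c := ⟨vec2 c.re c.im, by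
  apply Complex.ext <;> simp [toC, vec2]⟩

lemma inner_toC (c : ℂ) (x : E2) :
    ⟪vec2 c.re c.im, x⟫ = (c * (starRingEnd ℂ) (toC x)).re := by
  simp [vec2, toC, PiLp.inner_apply, Fin.sum_univ_two]
  ring

/-- The sum of minima. -/
def minSum {m : ℕ} (z : Fin m → ℂ) (u v : ℂ) : ℝ :=
  ∑ j, min ((z j * (starRingEnd ℂ) u).re ^ 2) ((z j * (starRingEnd ℂ) v).re ^ 2)

lemma abs_sub_abs_sq (s t : ℝ) : (|s| - |t|) ^ 2 = min ((s + t) ^ 2) ((s - t) ^ 2) := by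
  have h : (|s| - |t|) ^ 2 = s ^ 2 + t ^ 2 - 2 * |s * t| := by
    rw [abs_mul, sub_sq, sq_abs, sq_abs]; ring
  rw [h]
  rcases le_total 0 (s * t) with h1 | h1
  · rw [abs_of_nonneg h1, min_eq_right (by nlinarith)]; ring
  · rw [abs_of_nonpos h1, min_eq_left (by nlinarith)]; ring

lemma phi_sq {m : ℕ} (z : Fin m → ℂ)
    (a : Fin m → E2) (ha : ∀ j, a j = vec2 (z j).re (z j).im) (x y : E2) :
    ‖PhiMap a x - PhiMap a y‖ ^ 2 = minSum z (toC x + toC y) (toC x - toC y) := by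
  rw [EuclideanSpace.norm_sq_eq, minSum]
  refine Finset.sum_congr rfl fun j _ => ?_
  have : (PhiMap a x - PhiMap a y) j = |⟪a j, x⟫| - |⟪a j, y⟫| := rfl
  rw [this, ha, inner_toC, inner_toC, Real.norm_eq_abs, sq_abs, abs_sub_abs_sq,
    map_add, map_sub, mul_add, mul_sub, Complex.add_re, Complex.sub_re]

lemma re_sq (c u : ℂ) : (c * (starRingEnd ℂ) u).re ^ 2 =
    (‖c‖ ^ 2 * ‖u‖ ^ 2 + (c ^ 2 * (starRingEnd ℂ) (u ^ 2)).re) / 2 := by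
  rw [Complex.sq_norm, Complex.sq_norm, Complex.normSq_apply, Complex.normSq_apply]
  simp [pow_two]
  ring

lemma tight {m : ℕ} (z : Fin m → ℂ) (hsq : ∑ j, (z j) ^ 2 = 0) (u : ℂ) :
    ∑ j, (z j * (starRingEnd ℂ) u).re ^ 2 = (∑ j, ‖z j‖ ^ 2) / 2 * ‖u‖ ^ 2 := by
  simp_rw [re_sq]
  rw [← Finset.sum_div, Finset.sum_add_distrib, ← Complex.re_sum, ← Finset.sum_mul,
    ← Finset.sum_mul, hsq]
  simp
  ring

lemma minSum_comm {m : ℕ} (z : Fin m → ℂ) (u v : ℂ) : minSum z u v = minSum z v u := by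
  simp [minSum, min_comm]

lemma minSum_le {m : ℕ} (z : Fin m → ℂ) (hsq : ∑ j, (z j) ^ 2 = 0) (u v : ℂ) :
    minSum z u v ≤ (∑ j, ‖z j‖ ^ 2) / 2 * ‖u‖ ^ 2 := by
  rw [← tight z hsq]
  exact Finset.sum_le_sum fun j _ => min_le_left _ _

/-- The width function. -/
def gF {m : ℕ} (z : Fin m → ℂ) (w : ℂ) : ℝ := ∑ j, |((z j) ^ 2 * (starRingEnd ℂ) w).re|

lemma gF_smul {m : ℕ} (z : Fin m → ℂ) (t : ℝ) (w : ℂ) : gF z (t * w) = |t| * gF z w := by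
  rw [gF, gF, Finset.mul_sum]
  refine Finset.sum_congr rfl fun j _ => ?_
  rw [← abs_mul]
  congr 1
  rw [map_mul, Complex.conj_ofReal, mul_left_comm, Complex.re_ofReal_mul]

lemma gF_le {m : ℕ} (z : Fin m → ℂ) (M : ℝ) (hM : ∀ w, ‖w‖ = 1 → gF z w ≤ M) (w : ℂ) :
    gF z w ≤ ‖w‖ * M := by
  by_cases h : w = 0
  · simp [h, gF]
  have hw : ‖w‖ ≠ 0 := by simpa using h
  have e : w = (‖w‖ : ℝ) * (((‖w‖⁻¹ : ℝ) : ℂ) * w) := by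
    rw [← mul_assoc, ← Complex.ofReal_mul, mul_inv_cancel₀ hw]; simp
  rw [e, gF_smul, abs_of_nonneg (norm_nonneg _), ← e]
  refine mul_le_mul_of_nonneg_left (hM _ ?_) (norm_nonneg _)
  rw [norm_mul, Complex.norm_real, norm_inv, norm_norm, inv_mul_cancel₀ hw]

/-- Equal norms: exact formula. -/
lemma minSum_eq {m : ℕ} (z : Fin m → ℂ) (hsq : ∑ j, (z j) ^ 2 = 0) (u v : ℂ)
    (h : ‖u‖ = ‖v‖) :
    minSum z u v = (∑ j, ‖z j‖ ^ 2) / 2 * ‖v‖ ^ 2 - gF z (u ^ 2 - v ^ 2) / 4 := by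
  have key : ∀ p q : ℝ, min p q = (p + q) / 2 - |p - q| / 2 := by
    intro p q
    rcases le_total p q with h | h
    · rw [min_eq_left h, abs_of_nonpos (by linarith)]; ring
    · rw [min_eq_right h, abs_of_nonneg (by linarith)]; ring
  have hd : ∀ j, |(z j * (starRingEnd ℂ) u).re ^ 2 - (z j * (starRingEnd ℂ) v).re ^ 2|
      = |((z j) ^ 2 * (starRingEnd ℂ) (u ^ 2 - v ^ 2)).re| / 2 := by
    intro j
    rw [re_sq, re_sq, h, map_sub, mul_sub, Complex.sub_re]
    rw [show ∀ A p q : ℝ, (A + p) / 2 - (A + q) / 2 = (p - q) / 2 by intros; ring, abs_div]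
    norm_num
  unfold minSum
  simp_rw [key, hd]
  rw [Finset.sum_sub_distrib, ← Finset.sum_div, Finset.sum_add_distrib, tight z hsq, tight z hsq,
    h, ← Finset.sum_div, ← Finset.sum_div, gF]
  ring

lemma le_minSum' {m : ℕ} (z : Fin m → ℂ) (hsq : ∑ j, (z j) ^ 2 = 0) (M : ℝ) (hM0 : 0 ≤ M)
    (hM : ∀ w, ‖w‖ = 1 → gF z w ≤ M) (u v : ℂ) (h : ‖v‖ ≤ ‖u‖) :
    ((∑ j, ‖z j‖ ^ 2) - M) / 2 * ‖v‖ ^ 2 ≤ minSum z u v := by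
  by_cases hu : u = 0
  · have hv : v = 0 := by simpa [hu] using h
    simp [hu, hv, minSum]
  have hu' : 0 < ‖u‖ := by simpa using hu
  set t : ℝ := ‖v‖ / ‖u‖ with ht
  have ht0 : 0 ≤ t := by positivity
  have ht1 : t ≤ 1 := by rw [ht, div_le_one hu']; exact h
  have hn : ‖(t : ℂ) * u‖ = ‖v‖ := by
    rw [norm_mul, Complex.norm_real, Real.norm_eq_abs, abs_of_nonneg ht0, ht,
      div_mul_cancel₀ _ hu'.ne']
  have h1 : minSum z (t * u) v ≤ minSum z u v := by
    refine Finset.sum_le_sum fun j _ => min_le_min_right _ ?_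
    rw [map_mul, Complex.conj_ofReal, mul_left_comm, Complex.re_ofReal_mul, mul_pow]
    exact mul_le_of_le_one_left (sq_nonneg _) (pow_le_one₀ ht0 ht1)
  refine le_trans ?_ h1
  rw [minSum_eq z hsq _ _ hn]
  have h2 := gF_le z M hM (((t : ℂ) * u) ^ 2 - v ^ 2)
  have h3 : ‖((t : ℂ) * u) ^ 2 - v ^ 2‖ ≤ 2 * ‖v‖ ^ 2 := by
    refine (norm_sub_le _ _).trans ?_
    rw [norm_pow, norm_pow, hn]; linarith
  nlinarith [mul_le_mul_of_nonneg_right h3 hM0]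

lemma le_minSum {m : ℕ} (z : Fin m → ℂ) (hsq : ∑ j, (z j) ^ 2 = 0) (M : ℝ) (hM0 : 0 ≤ M)
    (hM : ∀ w, ‖w‖ = 1 → gF z w ≤ M) (u v : ℂ) :
    ((∑ j, ‖z j‖ ^ 2) - M) / 2 * (min ‖v‖ ‖u‖) ^ 2 ≤ minSum z u v := by
  rcases le_total ‖v‖ ‖u‖ with h | h
  · rw [min_eq_left h]; exact le_minSum' z hsq M hM0 hM u v h
  · rw [min_eq_right h, minSum_comm]; exact le_minSum' z hsq M hM0 hM v u h

theorem stmt5 {m : ℕ} (z : Fin m → ℂ) (hz : ∃ j, z j ≠ 0)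
    (hsq : ∑ j, (z j) ^ 2 = 0)
    (a : Fin m → E2) (ha : ∀ j, a j = vec2 (z j).re (z j).im) :
    condNum a =
      ENNReal.ofReal (1 -
          sSup {s | ∃ w : ℂ, ‖w‖ = 1 ∧ s = ∑ j, |((z j) ^ 2 * (starRingEnd ℂ) w).re|} /
            (∑ j, ‖z j‖ ^ 2)) ^ (-(1 / 2) : ℝ) := by
  obtain ⟨w0, hw0, hmax⟩ : ∃ w0 : ℂ, ‖w0‖ = 1 ∧ ∀ w, ‖w‖ = 1 → gF z w ≤ gF z w0 := by
    have hc : ContinuousOn (gF z) (Metric.sphere (0 : ℂ) 1) := by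
      apply Continuous.continuousOn
      unfold gF
      fun_prop
    obtain ⟨w0, h1, h2⟩ := (isCompact_sphere (0 : ℂ) 1).exists_isMaxOn ⟨1, by simp⟩ hc
    exact ⟨w0, by simpa using h1, fun w hw => h2 (by simpa using hw)⟩
  set M := gF z w0 with hMdef
  have hsup : sSup {s | ∃ w : ℂ, ‖w‖ = 1 ∧ s = ∑ j, |((z j) ^ 2 * (starRingEnd ℂ) w).re|} = M := by
    apply IsGreatest.csSup_eq
    refine ⟨⟨w0, hw0, rfl⟩, ?_⟩
    rintro s ⟨w, hw, rfl⟩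
    exact hmax w hw
  rw [hsup]
  have hM0 : 0 ≤ M := Finset.sum_nonneg fun j _ => abs_nonneg _
  set S := ∑ j, ‖z j‖ ^ 2 with hS
  have hS0 : 0 < S := by
    obtain ⟨j, hj⟩ := hz
    exact Finset.sum_pos' (fun j _ => by positivity) ⟨j, Finset.mem_univ _, by positivity⟩
  have hMS : M ≤ S := by
    refine Finset.sum_le_sum fun j _ => (Complex.abs_re_le_norm _).trans ?_
    simp [hw0]
  have hpd : ∀ x y : E2, pdist x y = min ‖toC x - toC y‖ ‖toC x + toC y‖ := by
    intro x y; rw [pdist, ← toC_norm, ← toC_norm, toC_add, toC_sub]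
  have hpn : ∀ x y : E2, 0 ≤ pdist x y := fun x y => le_min (norm_nonneg _) (norm_nonneg _)
  -- upper constant
  have hU : lipU a = √(S / 2) := by
    apply IsGreatest.csSup_eq
    constructor
    · obtain ⟨x, hx⟩ := toC_surj 1
      obtain ⟨y, hy⟩ := toC_surj 0
      have hp : pdist x y = 1 := by simp [hpd, hx, hy]
      refine ⟨x, y, by simp [hp], ?_⟩
      rw [hp, div_one, Real.sqrt_eq_iff_mul_self_eq (by positivity) (norm_nonneg _), ← pow_two,
        phi_sq z a ha, hx, hy, minSum_eq z hsq _ _ (by simp)]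
      simp [gF, hS]
    · rintro r ⟨x, y, hxy, rfl⟩
      have hp : 0 < pdist x y := lt_of_le_of_ne (hpn x y) (Ne.symm hxy)
      apply Real.le_sqrt_of_sq_le
      rw [div_pow, div_le_iff₀ (by positivity), phi_sq z a ha, hpd]
      rcases min_choice ‖toC x - toC y‖ ‖toC x + toC y‖ with h | h <;> rw [h]
      · rw [minSum_comm]; exact minSum_le z hsq _ _
      · exact minSum_le z hsq _ _
  have hL : lipL a = √((S - M) / 2) := by
    apply IsLeast.csInf_eq
    constructor
    · obtain ⟨c, hc⟩ := IsAlgClosed.exists_pow_nat_eq w0 (n := 2) (by norm_num)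
      have hcn : ‖c‖ = 1 := by
        have : ‖c‖ ^ 2 = 1 := by rw [← norm_pow, hc, hw0]
        exact (pow_eq_one_iff_of_nonneg (norm_nonneg _) (by norm_num)).1 this
      obtain ⟨x, hx⟩ := toC_surj ((c + Complex.I * c) / 2)
      obtain ⟨y, hy⟩ := toC_surj ((c - Complex.I * c) / 2)
      have h1 : toC x + toC y = c := by rw [hx, hy]; ring
      have h2 : toC x - toC y = Complex.I * c := by rw [hx, hy]; ring
      have hp : pdist x y = 1 := by simp [hpd, h1, h2, hcn]
      refine ⟨x, y, by simp [hp], ?_⟩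
      rw [hp, div_one, Real.sqrt_eq_iff_mul_self_eq (by linarith) (norm_nonneg _), ← pow_two,
        phi_sq z a ha, h1, h2, minSum_eq z hsq _ _ (by simp)]
      have : c ^ 2 - (Complex.I * c) ^ 2 = ((2 : ℝ) : ℂ) * w0 := by
        rw [mul_pow, Complex.I_sq, hc]; push_cast; ring
      rw [this, gF_smul]
      simp [hcn, ← hS, ← hMdef]
      ring
    · rintro r ⟨x, y, hxy, rfl⟩
      have hp : 0 < pdist x y := lt_of_le_of_ne (hpn x y) (Ne.symm hxy)
      apply Real.sqrt_le_iff.2 ⟨by positivity, ?_⟩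
      rw [div_pow, le_div_iff₀ (by positivity), phi_sq z a ha, hpd]
      exact le_minSum z hsq M hM0 hmax _ _
  rw [condNum, hU, hL]
  rcases hMS.eq_or_lt with h | h
  · rw [h, div_self hS0.ne']
    simp
  · have hd : 0 < S - M := sub_pos.2 h
    have hne : √((S - M) / 2) ≠ 0 := (Real.sqrt_pos.2 (by positivity)).ne'
    have hq : 0 < 1 - M / S := by rw [sub_pos, div_lt_one hS0]; exact h
    rw [if_neg hne, ENNReal.ofReal_rpow_of_pos hq, ← Real.sqrt_div (by positivity),
      Real.rpow_neg hq.le, ← Real.sqrt_eq_rpow, ← Real.sqrt_inv]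
    congr 2
    field_simp
end
end

section
/- Let m ≥ 3 be an integer that has an odd factor (i.e. m is not a power of 2). Then inf{β_A : A ∈ ℝ^{m×2}} = (1 − 1/(m·sin(π/(2m))))^{−1/2}, and this infimum is attained by some A ∈ ℝ^{m×2}. -/
noncomputable section

open Real
open scoped RealInnerProductSpace ENNReal

lemma aux_telescope (m : ℕ) (θ : ℕ → ℝ)
    (hmono : ∀ i j, i ≤ j → j ≤ m → θ i ≤ θ j) (hθ : θ m = θ 0 + π) (j : ℕ) (hj : j < m) :
    ∑ k ∈ Finset.range m,
      Real.sin ((θ (k+1) - θ k)/2) * |Real.sin (θ j - (θ k + θ (k+1))/2)| = 1 := by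
  have key : ∀ a b c : ℝ, Real.sin ((b - a)/2) * Real.sin (c - (a + b)/2)
      = (Real.cos (b - c) - Real.cos (a - c))/2 := by
    intro a b c
    rw [Real.cos_sub_cos]
    have h1 : (b - c + (a - c))/2 = -(c - (a+b)/2) := by ring
    have h2 : (b - c - (a - c))/2 = (b - a)/2 := by ring
    rw [h1, h2, Real.sin_neg]; ring
  have h1 : ∀ n, n ≤ j → ∑ k ∈ Finset.range n,
      Real.sin ((θ (k+1) - θ k)/2) * |Real.sin (θ j - (θ k + θ (k+1))/2)|
      = (Real.cos (θ n - θ j) - Real.cos (θ 0 - θ j))/2 := by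
    intro n
    induction n with
    | zero => intro _; simp
    | succ n ih =>
      intro hn
      rw [Finset.sum_range_succ, ih (by omega), abs_of_nonneg, key]
      · ring
      · apply Real.sin_nonneg_of_nonneg_of_le_pi
        · have := hmono n (n+1) (by omega) (by omega)
          have := hmono (n+1) j (by omega) (by omega)
          linarith
        · have := hmono 0 n (by omega) (by omega)
          have := hmono 0 (n+1) (by omega) (by omega)
          have := hmono j m (by omega) (by omega)
          linarith
  have h2 : ∀ n, j ≤ n → n ≤ m → ∑ k ∈ Finset.range n,
      Real.sin ((θ (k+1) - θ k)/2) * |Real.sin (θ j - (θ k + θ (k+1))/2)|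
      = (1 - Real.cos (θ 0 - θ j))/2 + (1 - Real.cos (θ n - θ j))/2 := by
    intro n hn
    induction n, hn using Nat.le_induction with
    | base => intro _; rw [h1 j le_rfl]; simp
    | succ n hn ih =>
      intro hnm
      rw [Finset.sum_range_succ, ih (by omega), abs_of_nonpos, mul_neg, key]
      · ring
      · apply Real.sin_nonpos_of_nonpos_of_neg_pi_le
        · have := hmono j n (by omega) (by omega)
          have := hmono j (n+1) (by omega) (by omega)
          linarith
        · have := hmono n m (by omega) (by omega)
          have := hmono (n+1) m (by omega) (by omega)
          have := hmono 0 j (by omega) (by omega)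
          linarith
  rw [h2 m hj.le le_rfl, hθ]
  have : θ 0 + π - θ j = (θ 0 - θ j) + π := by ring
  rw [this, Real.cos_add_pi]; ring

lemma aux_jensen (m : ℕ) (hm : 0 < m) (θ : ℕ → ℝ)
    (hmono : ∀ i j, i ≤ j → j ≤ m → θ i ≤ θ j) (hθ : θ m = θ 0 + π) :
    ∑ k ∈ Finset.range m, Real.sin ((θ (k+1) - θ k)/2) ≤ m * Real.sin (π / (2 * m)) := by
  have hm' : (0:ℝ) < m := by exact_mod_cast hm
  have h := strictConcaveOn_sin_Icc.concaveOn.le_map_sum (t := Finset.range m)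
    (w := fun _ => 1 / (m:ℝ)) (p := fun k => (θ (k+1) - θ k)/2)
    (fun _ _ => by positivity) (by simp; field_simp) (by
      intro k hk
      have hk := Finset.mem_range.1 hk
      have := hmono k (k+1) (by omega) (by omega)
      have := hmono 0 k (by omega) (by omega)
      have := hmono (k+1) m (by omega) (by omega)
      constructor <;> linarith [Real.pi_pos])
  simp only [smul_eq_mul] at h
  rw [← Finset.mul_sum, ← Finset.mul_sum, ← Finset.sum_div, Finset.sum_range_sub, hθ] at h
  have e : 1 / (m:ℝ) * ((θ 0 + π - θ 0)/2) = π / (2 * m) := by field_simp; ring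
  rw [e] at h
  calc _ = m * (1 / (m:ℝ) * ∑ k ∈ Finset.range m, Real.sin ((θ (k+1) - θ k)/2)) := by
        field_simp
    _ ≤ _ := by gcongr

lemma aux_dir (m : ℕ) (hm : 0 < m) (θ r : Fin m → ℝ) (hr : ∀ j, 0 ≤ r j) :
    ∃ φ : ℝ, ∑ j, r j ≤ (m * Real.sin (π / (2 * m))) * ∑ j, r j * |Real.cos (θ j - φ)| := by
  let θ' : Fin m → ℝ := fun j => toIcoMod Real.pi_pos 0 (θ j)
  have hθ'mem : ∀ j, θ' j ∈ Set.Ico 0 (0 + π) := fun j => toIcoMod_mem_Ico _ _ _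
  have hcos : ∀ j φ, |Real.cos (θ j - φ)| = |Real.cos (θ' j - φ)| := by
    intro j φ
    have h : θ j = θ' j + toIcoDiv Real.pi_pos 0 (θ j) • π :=
      (toIcoMod_add_toIcoDiv_zsmul _ _ _).symm
    have h2 : θ j - φ = (θ' j - φ) + (toIcoDiv Real.pi_pos 0 (θ j) : ℤ) * π := by
      rw [zsmul_eq_mul] at h; linarith
    rw [h2, Real.cos_add_int_mul_pi, abs_mul, abs_zpow]; simp
  let σ := Tuple.sort θ'
  have hσ : Monotone (θ' ∘ σ) := Tuple.monotone_sort θ'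
  let Θ : ℕ → ℝ := fun k => if h : k < m then θ' (σ ⟨k, h⟩) else θ' (σ ⟨0, hm⟩) + π
  have hΘ : ∀ j : Fin m, Θ j = θ' (σ j) := fun j => by simp [Θ]
  have hmono : ∀ i j, i ≤ j → j ≤ m → Θ i ≤ Θ j := by
    intro i j hij hj
    simp only [Θ]
    split_ifs with h1 h2 h2
    · exact hσ (by simpa using hij)
    · have := (hθ'mem (σ ⟨i, h1⟩)).2
      have := (hθ'mem (σ ⟨0, hm⟩)).1
      linarith
    · omega
    · exact le_rfl
  have hΘm : Θ m = Θ 0 + π := by simp [Θ, hm]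
  let w : ℕ → ℝ := fun k => Real.sin ((Θ (k+1) - Θ k)/2)
  let φ : ℕ → ℝ := fun k => (Θ k + Θ (k+1))/2 + π/2
  let h : ℕ → ℝ := fun k => ∑ j, r j * |Real.cos (θ j - φ k)|
  have hw : ∀ k ∈ Finset.range m, 0 ≤ w k := by
    intro k hk
    have hk := Finset.mem_range.1 hk
    have := hmono k (k+1) (by omega) (by omega)
    have := hmono 0 k (by omega) (by omega)
    have := hmono (k+1) m (by omega) (by omega)
    apply Real.sin_nonneg_of_nonneg_of_le_pi <;> linarith [Real.pi_pos]
  have hone : ∀ j, ∑ k ∈ Finset.range m, w k * |Real.cos (θ j - φ k)| = 1 := by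
    intro j
    have := aux_telescope m Θ hmono hΘm (σ.symm j) (σ.symm j).2
    rw [hΘ, Equiv.apply_symm_apply] at this
    rw [← this]
    refine Finset.sum_congr rfl fun k _ => ?_
    rw [hcos]
    have e : θ' j - φ k = (θ' j - (Θ k + Θ (k+1))/2) - π/2 := by simp only [φ]; ring
    rw [e, Real.cos_sub_pi_div_two]
  obtain ⟨K, hK, hmax⟩ := Finset.exists_max_image (Finset.range m) h ⟨0, by simpa using hm⟩
  refine ⟨φ K, ?_⟩
  have hhK : 0 ≤ h K := Finset.sum_nonneg fun j _ => mul_nonneg (hr j) (abs_nonneg _)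
  calc ∑ j, r j = ∑ j, r j * ∑ k ∈ Finset.range m, w k * |Real.cos (θ j - φ k)| := by
        simp [hone]
    _ = ∑ k ∈ Finset.range m, w k * h k := by
        simp only [h, Finset.mul_sum]
        rw [Finset.sum_comm]
        refine Finset.sum_congr rfl fun k _ => Finset.sum_congr rfl fun j _ => by ring
    _ ≤ ∑ k ∈ Finset.range m, w k * h K :=
        Finset.sum_le_sum fun k hk => mul_le_mul_of_nonneg_left (hmax k hk) (hw k hk)
    _ = (∑ k ∈ Finset.range m, w k) * h K := by rw [Finset.sum_mul]
    _ ≤ _ := mul_le_mul_of_nonneg_right (aux_jensen m hm Θ hmono hΘm) hhK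

lemma aux_inner (a b c d : ℝ) : ⟪vec2 a b, vec2 c d⟫ = a * c + b * d := by
  simp [vec2, PiLp.inner_apply, Fin.sum_univ_two, mul_comm]

lemma aux_polar (v : E2) : ∃ r t : ℝ, v = vec2 (r * Real.cos t) (r * Real.sin t) ∧ r = ‖v‖ := by
  let z : ℂ := ⟨v 0, v 1⟩
  have hz : ‖z‖ = ‖v‖ := by
    rw [EuclideanSpace.norm_eq, Complex.norm_eq_sqrt_sq_add_sq]
    simp [z, Fin.sum_univ_two]
  refine ⟨‖z‖, z.arg, ?_, hz⟩
  rw [Complex.norm_mul_cos_arg, Complex.norm_mul_sin_arg]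
  ext i
  fin_cases i <;> simp [vec2, z]

lemma aux_norm (a b : ℝ) : ‖vec2 a b‖ = √(a^2 + b^2) := by
  rw [EuclideanSpace.norm_eq]; simp [vec2, Fin.sum_univ_two]

lemma aux_Phi {m : ℕ} (a : Fin m → E2) (x y : E2) :
    ‖PhiMap a x - PhiMap a y‖ ^ 2 = ∑ j, (|⟪a j, x⟫| - |⟪a j, y⟫|)^2 := by
  rw [EuclideanSpace.norm_sq_eq]
  refine Finset.sum_congr rfl fun j _ => ?_
  simp [PhiMap]

lemma aux_pdist_nonneg (x y : E2) : 0 ≤ pdist x y := le_min (norm_nonneg _) (norm_nonneg _)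

/-- Upper Lipschitz bound. -/
lemma aux_upper_s7 {m : ℕ} (a : Fin m → E2) (C : ℝ) (hC : 0 ≤ C)
    (h : ∀ z : E2, ∑ j, ⟪a j, z⟫^2 ≤ C * ‖z‖^2) :
    ∀ r ∈ ratioSet a, r ≤ √C := by
  rintro r ⟨x, y, hp, rfl⟩
  have hp0 : 0 < pdist x y := lt_of_le_of_ne (aux_pdist_nonneg x y) (Ne.symm hp)
  rw [div_le_iff₀ hp0]
  apply le_of_sq_le_sq _ (by positivity)
  rw [aux_Phi, mul_pow, Real.sq_sqrt hC]
  have h1 : ∑ j, (|⟪a j, x⟫| - |⟪a j, y⟫|)^2 ≤ C * ‖x - y‖^2 := by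
    refine le_trans (Finset.sum_le_sum fun j _ => ?_) (h _)
    rw [inner_sub_right]
    exact sq_le_sq.2 (abs_abs_sub_abs_le _ _)
  have h2 : ∑ j, (|⟪a j, x⟫| - |⟪a j, y⟫|)^2 ≤ C * ‖x + y‖^2 := by
    refine le_trans (Finset.sum_le_sum fun j _ => ?_) (h _)
    rw [inner_add_right]
    have := abs_abs_sub_abs_le (⟪a j, x⟫) (-⟪a j, y⟫)
    rw [abs_neg, sub_neg_eq_add] at this
    exact sq_le_sq.2 this
  unfold pdist
  rcases min_choice ‖x - y‖ ‖x + y‖ with e | e <;> rw [e] <;> assumption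

lemma aux_ratio_nonneg {m : ℕ} (a : Fin m → E2) : ∀ r ∈ ratioSet a, 0 ≤ r := by
  rintro r ⟨x, y, hp, rfl⟩
  exact div_nonneg (norm_nonneg _) (aux_pdist_nonneg x y)

lemma aux_bdd_s7 {m : ℕ} (a : Fin m → E2) : BddAbove (ratioSet a) := by
  refine ⟨√(∑ j, ‖a j‖^2), fun r hr => ?_⟩
  refine aux_upper_s7 a _ (by positivity) (fun z => ?_) r hr
  rw [Finset.sum_mul]
  refine Finset.sum_le_sum fun j _ => ?_
  rw [← mul_pow]
  exact sq_le_sq.2 (by rw [abs_of_nonneg (by positivity : 0 ≤ ‖a j‖ * ‖z‖)]; exact abs_real_inner_le_norm _ _)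

lemma aux_c {m : ℕ} (hm : 3 ≤ m) : 1 < m * Real.sin (π / (2 * m)) := by
  have hm' : (3:ℝ) ≤ m := by exact_mod_cast hm
  have h := Real.mul_lt_sin (x := π / (2 * m)) (by positivity) (by
    apply div_lt_div_of_pos_left Real.pi_pos (by norm_num) (by linarith))
  have e : 2 / π * (π / (2 * m)) = 1 / (m:ℝ) := by field_simp
  rw [e, div_lt_iff₀ (by linarith)] at h
  linarith

lemma aux_mem_unit {m : ℕ} (a : Fin m → E2) (x : E2) (hx : ‖x‖ = 1) :
    √(∑ j, ⟪a j, x⟫^2) ∈ ratioSet a := by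
  have hp : pdist x 0 = 1 := by simp [pdist, hx]
  refine ⟨x, 0, by rw [hp]; norm_num, ?_⟩
  rw [hp, div_one, ← Real.sqrt_sq (norm_nonneg (PhiMap a x - PhiMap a 0)), aux_Phi]
  simp

lemma aux_U {m : ℕ} (a : Fin m → E2) (ρ α : Fin m → ℝ)
    (ha : ∀ j, a j = vec2 (ρ j * Real.cos (α j)) (ρ j * Real.sin (α j))) :
    (∑ j, ρ j ^ 2) / 2 ≤ lipU a ^ 2 ∧ 0 ≤ lipU a := by
  have h1 := le_csSup (aux_bdd_s7 a) (aux_mem_unit a (vec2 1 0) (by simp [aux_norm]))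
  have h2 := le_csSup (aux_bdd_s7 a) (aux_mem_unit a (vec2 0 1) (by simp [aux_norm]))
  have h0 : 0 ≤ lipU a := le_trans (Real.sqrt_nonneg _) h1
  refine ⟨?_, h0⟩
  change _ ≤ lipU a at h1 h2
  rw [Real.sqrt_le_left h0] at h1 h2
  have : ∑ j, ρ j ^ 2 = ∑ j, ⟪a j, vec2 1 0⟫^2 + ∑ j, ⟪a j, vec2 0 1⟫^2 := by
    rw [← Finset.sum_add_distrib]
    refine Finset.sum_congr rfl fun j _ => ?_
    rw [ha, aux_inner, aux_inner]
    linear_combination (-ρ j ^ 2) * Real.sin_sq_add_cos_sq (α j)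
  linarith

lemma aux_L {m : ℕ} (a : Fin m → E2) (ρ α : Fin m → ℝ)
    (ha : ∀ j, a j = vec2 (ρ j * Real.cos (α j)) (ρ j * Real.sin (α j))) (φ : ℝ) :
    lipL a ^ 2 ≤ (∑ j, ρ j ^ 2 - ∑ j, ρ j ^ 2 * |Real.cos (2 * α j - φ)|) / 2 := by
  set t := φ / 2 with ht
  set x := vec2 ((Real.cos t - Real.sin t)/2) ((Real.sin t + Real.cos t)/2) with hx
  set y := vec2 ((Real.cos t + Real.sin t)/2) ((Real.sin t - Real.cos t)/2) with hy
  have hsum : x + y = vec2 (Real.cos t) (Real.sin t) := by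
    ext i; fin_cases i <;> simp [hx, hy, vec2] <;> ring
  have hsub : x - y = vec2 (-Real.sin t) (Real.cos t) := by
    ext i; fin_cases i <;> simp [hx, hy, vec2] <;> ring
  have hp : pdist x y = 1 := by
    unfold pdist; rw [hsum, hsub, aux_norm, aux_norm]; simp
  have hmem : ‖PhiMap a x - PhiMap a y‖ ∈ ratioSet a :=
    ⟨x, y, by rw [hp]; norm_num, by rw [hp, div_one]⟩
  have hle : lipL a ≤ ‖PhiMap a x - PhiMap a y‖ := csInf_le ⟨0, aux_ratio_nonneg a⟩ hmem
  have h0 : 0 ≤ lipL a := Real.sInf_nonneg (aux_ratio_nonneg a)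
  refine (pow_le_pow_left₀ h0 hle 2).trans (le_of_eq ?_)
  rw [aux_Phi, ← Finset.sum_sub_distrib, Finset.sum_div]
  refine Finset.sum_congr rfl fun j _ => ?_
  rw [ha, hx, hy, aux_inner, aux_inner]
  set X := ρ j * Real.cos (α j) * ((Real.cos t - Real.sin t)/2) + ρ j * Real.sin (α j) * ((Real.sin t + Real.cos t)/2) with hX
  set Y := ρ j * Real.cos (α j) * ((Real.cos t + Real.sin t)/2) + ρ j * Real.sin (α j) * ((Real.sin t - Real.cos t)/2) with hY
  have e1 : X ^ 2 + Y ^ 2 = ρ j ^ 2 / 2 := by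
    have s1 := Real.sin_sq_add_cos_sq (α j)
    have s2 := Real.sin_sq_add_cos_sq t
    have : X ^ 2 + Y ^ 2 = ρ j ^ 2 / 2 * (Real.sin (α j)^2 + Real.cos (α j)^2) * (Real.sin t^2 + Real.cos t^2) := by
      rw [hX, hY]; ring
    rw [this, s1, s2]; ring
  have e2 : X * Y = ρ j ^ 2 * Real.cos (2 * α j - φ) / 4 := by
    have : 2 * α j - φ = 2 * (α j) - 2 * t := by rw [ht]; ring
    rw [this, Real.cos_sub, Real.cos_two_mul', Real.cos_two_mul', Real.sin_two_mul, Real.sin_two_mul, hX, hY]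
    ring
  have e3 : |X| * |Y| = ρ j ^ 2 * |Real.cos (2 * α j - φ)| / 4 := by
    rw [← abs_mul, e2, abs_div, abs_mul, abs_of_nonneg (sq_nonneg (ρ j))]; norm_num
  have e4 : (|X| - |Y|)^2 = X^2 + Y^2 - 2 * (|X| * |Y|) := by
    rw [← sq_abs X, ← sq_abs Y]; ring
  rw [e4, e1, e3]; ring

lemma aux_lower_s7 {m : ℕ} (hm : 3 ≤ m) (a : Fin m → E2) :
    ENNReal.ofReal (1 - 1 / (m * Real.sin (π / (2 * m)))) ^ (-(1 / 2) : ℝ) ≤ condNum a := by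
  unfold condNum
  split_ifs with hL
  · exact le_top
  have hM := aux_c hm
  set M := m * Real.sin (π / (2 * m)) with hMdef
  have hM0 : 0 < M := by linarith
  have hc : 0 < 1 - 1 / M := by
    rw [sub_pos, div_lt_one hM0]; exact hM
  rw [ENNReal.ofReal_rpow_of_pos hc]
  apply ENNReal.ofReal_le_ofReal
  rw [Real.rpow_neg hc.le, ← Real.sqrt_eq_rpow]
  have hLnn : 0 ≤ lipL a := Real.sInf_nonneg (aux_ratio_nonneg a)
  have hLpos : 0 < lipL a := lt_of_le_of_ne hLnn (Ne.symm hL)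
  choose ρ α ha hρ using fun j => aux_polar (a j)
  obtain ⟨hU, hU0⟩ := aux_U a ρ α ha
  obtain ⟨φ, hφ⟩ := aux_dir m (by omega) (fun j => 2 * α j) (fun j => ρ j ^ 2) (fun j => sq_nonneg _)
  have hL2 := aux_L a ρ α ha φ
  rw [← hMdef] at hφ
  set P := ∑ j, ρ j ^ 2
  set H := ∑ j, ρ j ^ 2 * |Real.cos (2 * α j - φ)|
  have hH : P / M ≤ H := by rw [div_le_iff₀ hM0]; linarith
  have hfin : lipL a ^ 2 ≤ (1 - 1 / M) * lipU a ^ 2 := by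
    calc lipL a ^ 2 ≤ (1 - 1/M) * (P / 2) := by
          have : (1 - 1/M) * (P / 2) = (P - P / M)/2 := by ring
          rw [this]; linarith
      _ ≤ _ := by gcongr
  have : lipL a ≤ √(1 - 1/M) * lipU a := by
    apply le_of_sq_le_sq _ (by positivity)
    rw [mul_pow, Real.sq_sqrt hc.le]; exact hfin
  rw [le_div_iff₀ hLpos, inv_mul_le_iff₀ (Real.sqrt_pos.2 hc)]
  exact this

lemma aux_sum_sin (m : ℕ) (hm : 0 < m) (ψ : ℝ) :
    Real.sin (π / (2 * m)) * ∑ j ∈ Finset.range m, |Real.sin (j * π / m + ψ)| ≤ 1 := by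
  have hm' : (0:ℝ) < m := by exact_mod_cast hm
  have hmc : m ≠ 0 := hm.ne'
  have hpos : 0 < π / m := by positivity
  let G : ℝ → ℝ := fun ψ => ∑ j ∈ Finset.range m, |Real.sin (j * π / m + ψ)|
  have hper : Function.Periodic G (π / m) := by
    intro x
    have h1 := Finset.sum_range_succ (fun j : ℕ => |Real.sin (j * π / m + x)|) m
    have h2 := Finset.sum_range_succ' (fun j : ℕ => |Real.sin (j * π / m + x)|) m
    rw [h1] at h2
    have e1 : |Real.sin ((m:ℕ) * π / m + x)| = |Real.sin (((0:ℕ):ℝ) * π / m + x)| := by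
      have : (m:ℝ) * π / m + x = x + π := by field_simp; ring
      rw [this, Real.sin_add_pi, abs_neg]; simp
    rw [e1] at h2
    have h3 := add_right_cancel h2
    simp only [G]
    rw [h3]
    refine Finset.sum_congr rfl fun j _ => ?_
    congr 2; push_cast; ring
  have main : ∀ x, 0 ≤ x → x ≤ π / m → Real.sin (π / (2 * m)) * G x ≤ 1 := by
    intro x hx0 hx1
    have hn : ∀ n, n ≤ m → 2 * (Real.sin (π / (2 * m)) * ∑ j ∈ Finset.range n, |Real.sin (j * π / m + x)|)
        = Real.cos (x - π / (2*m)) - Real.cos (n * π / m + x - π / (2 * m)) := by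
      intro n
      induction n with
      | zero => intro _; simp
      | succ n ih =>
        intro hnm
        have hnm' : ((n:ℝ) + 1) ≤ m := by exact_mod_cast hnm
        rw [Finset.sum_range_succ, mul_add, mul_add, ih (by omega), abs_of_nonneg]
        · have := Real.cos_sub_cos (((n+1:ℕ):ℝ) * π / m + x - π / (2 * m)) (n * π / m + x - π / (2 * m))
          have e1 : (((n+1:ℕ):ℝ) * π / m + x - π / (2 * m) + (n * π / m + x - π / (2 * m)))/2 = n * π / m + x := by
            push_cast; field_simp; ring
          have e2 : (((n+1:ℕ):ℝ) * π / m + x - π / (2 * m) - (n * π / m + x - π / (2 * m)))/2 = π / (2 * m) := by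
            push_cast; field_simp; ring
          rw [e1, e2] at this
          linarith
        · apply Real.sin_nonneg_of_nonneg_of_le_pi (by positivity)
          calc n * π / m + x ≤ n * π / m + π / m := by linarith
            _ = ((n:ℝ) + 1) * π / m := by ring
            _ ≤ m * π / m := by gcongr
            _ = π := by field_simp
    have h := hn m le_rfl
    have e : (m:ℝ) * π / m + x - π / (2 * m) = (x - π / (2*m)) + π := by
      have : (m:ℝ) * π / m = π := by field_simp
      rw [this]; ring
    rw [e, Real.cos_add_pi] at h
    have := Real.cos_le_one (x - π / (2*m))
    change _ * ∑ j ∈ Finset.range m, |Real.sin (j * π / m + x)| ≤ 1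
    linarith
  obtain ⟨y, hy, he⟩ := hper.exists_mem_Ico₀ hpos ψ
  have := main y hy.1 hy.2.le
  rw [← he] at this
  exact this

/-- Signed roots of unity sum to zero. -/
lemma aux_roots (k l : ℕ) (hk : Odd k) (hk1 : 1 < k) (hl : 0 < l) (t : ℝ) :
    ∑ j ∈ Finset.range (k * l),
      Real.cos ((j : ℕ) * π / ((k * l : ℕ) : ℝ) + π * ((j / l : ℕ) : ℝ) - t) = 0 := by
  have hl' : (0:ℝ) < l := by exact_mod_cast hl
  have hk' : (1:ℝ) < k := by exact_mod_cast hk1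
  have hk0 : (0:ℝ) < k := by linarith
  have hsplit : ∀ (f : ℕ → ℝ) (n : ℕ), ∑ j ∈ Finset.range (n * l), f j
      = ∑ i ∈ Finset.range n, ∑ r ∈ Finset.range l, f (i * l + r) := by
    intro f n
    induction n with
    | zero => simp
    | succ n ih => rw [Nat.succ_mul, Finset.sum_range_add, ih, Finset.sum_range_succ]
  rw [hsplit, Finset.sum_comm]
  refine Finset.sum_eq_zero fun r hr => ?_
  have hr := Finset.mem_range.1 hr
  have hd : ∀ i, (i * l + r) / l = i := by
    intro i
    rw [mul_comm, Nat.mul_add_div hl, Nat.div_eq_of_lt hr, add_zero]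
  -- the angle increases by δ = π / k + π at each step
  set δ : ℝ := π / k + π with hδ
  set s : ℝ := r * π / ((k * l : ℕ) : ℝ) - t with hs
  have hterm : ∀ i, (((i * l + r : ℕ) : ℝ) * π / ((k * l : ℕ) : ℝ) + π * (((i * l + r) / l : ℕ) : ℝ) - t)
      = i * δ + s := by
    intro i
    rw [hd, hδ, hs]; push_cast; field_simp; ring
  simp only [hterm]
  have htel : ∀ n : ℕ, 2 * Real.sin (δ / 2) * ∑ i ∈ Finset.range n, Real.cos (i * δ + s)
      = Real.sin (n * δ + s - δ / 2) - Real.sin (s - δ / 2) := by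
    intro n
    induction n with
    | zero => simp
    | succ n ih =>
      rw [Finset.sum_range_succ, mul_add, ih]
      have := Real.sin_sub_sin (((n+1:ℕ):ℝ) * δ + s - δ / 2) (n * δ + s - δ / 2)
      have e1 : (((n+1:ℕ):ℝ) * δ + s - δ / 2 - (n * δ + s - δ / 2))/2 = δ / 2 := by push_cast; ring
      have e2 : (((n+1:ℕ):ℝ) * δ + s - δ / 2 + (n * δ + s - δ / 2))/2 = n * δ + s := by push_cast; ring
      rw [e1, e2] at this
      linarith
  have h := htel k
  obtain ⟨q, hq⟩ := hk
  have e : (k:ℝ) * δ + s - δ / 2 = (s - δ / 2) + ((q + 1 : ℕ) : ℝ) * (2 * π) := by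
    have : (k:ℝ) * δ = π + k * π := by rw [hδ]; field_simp
    rw [this, hq]; push_cast; ring
  rw [e, Real.sin_add_nat_mul_two_pi, sub_self] at h
  have hsin : 0 < Real.sin (δ / 2) := by
    apply Real.sin_pos_of_pos_of_lt_pi
    · positivity
    · have : π / k < π := div_lt_self Real.pi_pos hk'
      rw [hδ]; linarith
  rcases mul_eq_zero.1 h with h | h
  · linarith
  · exact h

lemma aux_attain {m : ℕ} (hm : 3 ≤ m) (hodd : ∃ k, Odd k ∧ 1 < k ∧ k ∣ m) :
    ∃ a : Fin m → E2, condNum a ≤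
      ENNReal.ofReal (1 - 1 / (m * Real.sin (π / (2 * m)))) ^ (-(1 / 2) : ℝ) := by
  obtain ⟨k, hk, hk1, l, hl⟩ := hodd
  have hl0 : 0 < l := by
    rcases Nat.eq_zero_or_pos l with h | h
    · subst h; omega
    · exact h
  have hm' : (3:ℝ) ≤ m := by exact_mod_cast hm
  let β : ℕ → ℝ := fun j => (j:ℝ) * π / (m:ℝ) + π * ((j / l : ℕ) : ℝ)
  have hβ : ∀ t, ∑ j : Fin m, Real.cos (β j - t) = 0 := by
    intro t
    have := aux_roots k l hk hk1 hl0 t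
    rw [← hl] at this
    rw [Fin.sum_univ_eq_sum_range (fun j => Real.cos (β j - t)) m]
    exact this
  have hsin : ∀ ψ, Real.sin (π / (2 * m)) * ∑ j : Fin m, |Real.sin (β j - ψ)| ≤ 1 := by
    intro ψ
    have := aux_sum_sin m (by omega) (-ψ)
    rw [Fin.sum_univ_eq_sum_range (fun j => |Real.sin (β j - ψ)|) m]
    refine le_trans (le_of_eq ?_) this
    congr 1
    refine Finset.sum_congr rfl fun j _ => ?_
    have e : β j - ψ = (j * π / m + -ψ) + (j / l : ℕ) * π := by simp only [β]; ring
    rw [e, Real.sin_add_nat_mul_pi, abs_mul, abs_pow]; simp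
  let a : Fin m → E2 := fun j => vec2 (Real.cos (β j / 2)) (Real.sin (β j / 2))
  have hin : ∀ j r t, ⟪a j, vec2 (r * Real.cos t) (r * Real.sin t)⟫^2
      = r^2 * ((1 + Real.cos (β j - 2 * t)) / 2) := by
    intro j r t
    simp only [a]
    rw [aux_inner]
    have e1 : Real.cos (β j / 2) * (r * Real.cos t) + Real.sin (β j / 2) * (r * Real.sin t)
        = r * Real.cos (β j / 2 - t) := by rw [Real.cos_sub]; ring
    have e2 : β j - 2 * t = 2 * (β j / 2 - t) := by ring
    rw [e1, e2, Real.cos_two_mul]; ring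
  have hM := aux_c hm
  have hS : 0 < Real.sin (π / (2 * m)) := by
    by_contra hcon
    push Not at hcon
    nlinarith
  set S := Real.sin (π / (2 * m)) with hSdef
  have hM0 : 0 < m * S := by linarith
  have hc : 0 < 1 - 1 / (m * S) := by
    rw [sub_pos, div_lt_one hM0]; exact hM
  have hup : ∀ r ∈ ratioSet a, r ≤ √((m:ℝ)/2) := by
    apply aux_upper_s7 a _ (by positivity)
    intro z
    obtain ⟨r, t, hz, hr⟩ := aux_polar z
    rw [← hr, hz]
    simp only [hin]
    rw [← Finset.mul_sum, ← Finset.sum_div, Finset.sum_add_distrib, hβ]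
    simp; linarith
  have hlo : ∀ r ∈ ratioSet a, √((m:ℝ)/2 * (1 - 1/(m * S))) ≤ r := by
    rintro r ⟨x, y, hp, rfl⟩
    have hp0 : 0 < pdist x y := lt_of_le_of_ne (aux_pdist_nonneg x y) (Ne.symm hp)
    rw [le_div_iff₀ hp0]
    apply le_of_sq_le_sq _ (by positivity)
    rw [aux_Phi, mul_pow, Real.sq_sqrt (by positivity)]
    obtain ⟨r₁, t₁, h₁, hr₁⟩ := aux_polar (x + y)
    obtain ⟨r₂, t₂, h₂, hr₂⟩ := aux_polar (x - y)
    have hp1 : pdist x y ^ 2 ≤ r₁ ^ 2 := by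
      rw [hr₁]; exact pow_le_pow_left₀ hp0.le (min_le_right _ _) 2
    have hp2 : pdist x y ^ 2 ≤ r₂ ^ 2 := by
      rw [hr₂]; exact pow_le_pow_left₀ hp0.le (min_le_left _ _) 2
    have hterm : ∀ j : Fin m, pdist x y ^ 2 * (1/2 + Real.cos (β j - 2 * t₁) / 4 + Real.cos (β j - 2 * t₂) / 4
        - |Real.sin (β j - (t₁ + t₂))| / 2) ≤ (|⟪a j, x⟫| - |⟪a j, y⟫|)^2 := by
      intro j
      have q1 := hin j r₁ t₁
      have q2 := hin j r₂ t₂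
      rw [← h₁, inner_add_right] at q1
      rw [← h₂, inner_sub_right] at q2
      set X := ⟪a j, x⟫
      set Y := ⟪a j, y⟫
      have c1 := Real.neg_one_le_cos (β j - 2 * t₁)
      have c2 := Real.neg_one_le_cos (β j - 2 * t₂)
      have hdiff : |Real.cos (β j - 2 * t₁) - Real.cos (β j - 2 * t₂)| ≤ 2 * |Real.sin (β j - (t₁ + t₂))| := by
        rw [Real.cos_sub_cos]
        have e1 : (β j - 2 * t₁ + (β j - 2 * t₂))/2 = β j - (t₁ + t₂) := by ring
        rw [e1, abs_mul, abs_mul]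
        have := Real.abs_sin_le_one ((β j - 2 * t₁ - (β j - 2 * t₂))/2)
        have h0 := abs_nonneg (Real.sin (β j - (t₁ + t₂)))
        rw [show |(-2 : ℝ)| = 2 by norm_num]
        nlinarith
      have d := abs_le.1 hdiff
      have hcase : (|X| - |Y|)^2 = (X + Y)^2 ∨ (|X| - |Y|)^2 = (X - Y)^2 := by
        rcases abs_cases X with ⟨e, _⟩ | ⟨e, _⟩ <;> rcases abs_cases Y with ⟨f, _⟩ | ⟨f, _⟩ <;> rw [e, f]
        · right; ring
        · left; ring
        · left; ring
        · right; ring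
      rcases hcase with e | e <;> rw [e]
      · rw [q1]
        refine le_trans (mul_le_mul_of_nonneg_left ?_ (sq_nonneg _))
          (mul_le_mul_of_nonneg_right hp1 (by linarith))
        linarith
      · rw [q2]
        refine le_trans (mul_le_mul_of_nonneg_left ?_ (sq_nonneg _))
          (mul_le_mul_of_nonneg_right hp2 (by linarith))
        linarith
    refine le_trans ?_ (Finset.sum_le_sum fun j _ => hterm j)
    rw [← Finset.mul_sum, Finset.sum_sub_distrib, Finset.sum_add_distrib, Finset.sum_add_distrib,
      ← Finset.sum_div, ← Finset.sum_div, ← Finset.sum_div, hβ, hβ, mul_comm]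
    refine mul_le_mul_of_nonneg_left ?_ (sq_nonneg _)
    have h := hsin (t₁ + t₂)
    have h' : ∑ j : Fin m, |Real.sin (β j - (t₁ + t₂))| ≤ 1 / S := by
      rw [le_div_iff₀ hS]; linarith
    have e : (m:ℝ)/2 * (1 - 1/(m * S)) = m / 2 - (1 / S)/2 := by field_simp
    rw [e]
    simp
    rw [← Finset.sum_div]
    simp at h'
    linarith
  have hne : (ratioSet a).Nonempty := ⟨_, aux_mem_unit a (vec2 1 0) (by simp [aux_norm])⟩
  have hL : √((m:ℝ)/2 * (1 - 1/(m * S))) ≤ lipL a := le_csInf hne hlo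
  have hU : lipU a ≤ √((m:ℝ)/2) := csSup_le hne hup
  have hpos : 0 < √((m:ℝ)/2 * (1 - 1/(m * S))) := Real.sqrt_pos.2 (by positivity)
  have hLpos : 0 < lipL a := lt_of_lt_of_le hpos hL
  refine ⟨a, ?_⟩
  unfold condNum
  rw [if_neg hLpos.ne', ENNReal.ofReal_rpow_of_pos hc]
  apply ENNReal.ofReal_le_ofReal
  rw [Real.rpow_neg hc.le, ← Real.sqrt_eq_rpow, div_le_iff₀ hLpos]
  refine hU.trans ?_
  rw [← div_eq_inv_mul, le_div_iff₀ (Real.sqrt_pos.2 hc), ← Real.sqrt_mul (by positivity)]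
  exact hL

/-- If `m ≥ 3` has an odd factor, then the minimal condition number over
all `A ∈ ℝ^{m×2}` equals `(1 − 1/(m·sin(π/(2m))))^{−1/2}`, and the infimum is attained. -/
theorem stmt7 {m : ℕ} (hm : 3 ≤ m) (hodd : ∃ k, Odd k ∧ 1 < k ∧ k ∣ m) :
    (⨅ A : Fin m → E2, condNum A) =
        ENNReal.ofReal (1 - 1 / (m * Real.sin (π / (2 * m)))) ^ (-(1 / 2) : ℝ) ∧
    ∃ A : Fin m → E2, condNum A = ⨅ M : Fin m → E2, condNum M := by
  obtain ⟨a, ha⟩ := aux_attain hm hodd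
  have hle : ENNReal.ofReal (1 - 1 / (m * Real.sin (π / (2 * m)))) ^ (-(1 / 2) : ℝ)
      ≤ ⨅ A : Fin m → E2, condNum A := le_iInf fun A => aux_lower_s7 hm A
  have heq : (⨅ A : Fin m → E2, condNum A) =
        ENNReal.ofReal (1 - 1 / (m * Real.sin (π / (2 * m)))) ^ (-(1 / 2) : ℝ) :=
    le_antisymm ((iInf_le _ a).trans ha) hle
  exact ⟨heq, a, le_antisymm (ha.trans hle) (iInf_le _ a)⟩
end
end
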